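/- Suppose the symmetric matrix P satisfies the linear matrix inequalities P − εI ⪰ 0, G ⪯ 0, and sₘ ≥ 0 for m = 1,…,n. Then for every initial condition with ‖a₀‖ ≤ δ_f = δ√(λmin(P)/λmax(P)), every continuous input f with sup_{0≤t≤τ} ‖f(t)‖ ≤ f_LMI = λmin(P)εδ/(λmax(P)‖2P‖), and every continuously differentiable solution a : [0,τ] → ℝⁿ of ȧ(t) = La(t) + Υ(a(t)) + f(t) with a(0) = a₀ and output y(t) = a(t), the truncated output satisfies ‖y_τ‖_{L∞} ≤ γ‖f_τ‖_{L∞} + β, where γ = λmax(P)‖2P‖/(λmin(P)ε) and β = ‖a₀‖√(λmax(P)/λmin(P)). -/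

import Mathlib

/-!
The quadratic form `V(a) = aᵀPa` is a Lyapunov function. Evaluating the LMI `G ⪯ 0` at the vector
`(a, Υ(a))`, the multiplier terms disappear because `Υ(a)` is orthogonal to `a` and to `v`, and
Cauchy–Schwarz gives `Υₘ(a)² ≤ ‖a‖²‖Rₘa‖²`. Hence along solutions (`dissipation`)
`dV/dt ≤ -ε‖a‖² + ‖2P‖‖a‖‖f‖ + (‖a‖² - δ²) Σₘ sₘ‖Rₘa‖²`.

With `F = ‖f_τ‖` and `r = ‖2P‖F/ε`, the first two terms are nonpositive as soon as `‖a‖ ≥ r`. Put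
`c = λmax(P) max(‖a₀‖, r)²`; the smallness hypotheses imply `c ≤ λmin(P)δ²`. If
`V ≥ c`, then `‖a‖ ≥ r` and `‖a‖² - δ² ≤ (V - c)/λmin(P)`, so `dV/dt ≤ K(V - c)` with `K` finite because
the solution is bounded on `[0, τ]`. A Grönwall comparison (`le_of_deriv_le_excess`) then gives
`V ≤ c` on `[0, τ]`. Keeping the term in `‖a‖² - δ²` is what makes the argument work in the marginal
case `c = λmin(P)δ²`, where the solution might touch the sphere of radius `δ`.

The bound `V ≤ c` reads `‖a(t)‖ ≤ q max(‖a₀‖, r)` with `q = √(λmax(P)/λmin(P)) ≥ 1`, which is at most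
`q‖a₀‖ + q²r = β + γF`.
-/

noncomputable section

open Matrix Set MeasureTheory

/-- Euclidean norm on `Fin n → ℝ`. -/
def eNorm {n : ℕ} (a : Fin n → ℝ) : ℝ := Real.sqrt (∑ i, a i ^ 2)

/-- Truncation of a signal: equals `g` on `(-∞, τ]` (in particular on `[0, τ]`) and `0` for `t > τ`. -/
def trunc {E : Type*} [Zero E] (τ : ℝ) (g : ℝ → E) : ℝ → E := fun t => if t ≤ τ then g t else 0

/-- The `L∞` norm of a vector-valued signal on `[0, ∞)`: `sup_{t ≥ 0} ‖g t‖`. -/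
def eLinf {n : ℕ} (g : ℝ → Fin n → ℝ) : ℝ := ⨆ t : Set.Ici (0:ℝ), eNorm (g t.1)

/-- The `Lp` norm of a vector-valued signal on `[0, ∞)`: `(∫₀^∞ ‖g t‖^p dt)^(1/p)`. -/
def eLp {n : ℕ} (p : ℝ) (g : ℝ → Fin n → ℝ) : ℝ :=
  (∫ t in Set.Ioi (0:ℝ), eNorm (g t) ^ p) ^ (1/p)

/-- Smallest eigenvalue of a symmetric matrix, via its Rayleigh quotient characterization. -/
def lamMin {n : ℕ} (P : Matrix (Fin n) (Fin n) ℝ) : ℝ :=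
  sInf {r | ∃ a : Fin n → ℝ, eNorm a = 1 ∧ r = a ⬝ᵥ P.mulVec a}

/-- Largest eigenvalue of a symmetric matrix, via its Rayleigh quotient characterization. -/
def lamMax {n : ℕ} (P : Matrix (Fin n) (Fin n) ℝ) : ℝ :=
  sSup {r | ∃ a : Fin n → ℝ, eNorm a = 1 ∧ r = a ⬝ᵥ P.mulVec a}

/-- Spectral norm of a matrix: the induced Euclidean operator norm. -/
def specNorm {n : ℕ} (M : Matrix (Fin n) (Fin n) ℝ) : ℝ :=
  sSup {r | ∃ a : Fin n → ℝ, eNorm a = 1 ∧ r = eNorm (M.mulVec a)}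

/-- The quadratic nonlinearity `Υ`, with components `Υₘ(a) = aᵀ Rₘ a`. -/
def Ups {n : ℕ} (R : Fin n → Matrix (Fin n) (Fin n) ℝ) (a : Fin n → ℝ) : Fin n → ℝ :=
  fun m => a ⬝ᵥ (R m).mulVec a


/-- The 2n×2n block LMI matrix
`G = [[LᵀP + PL + εI + Σₘ sₘδ²RₘRₘ, P + Σᵢ μᵢMᵢ], [P + Σᵢ μᵢMᵢᵀ, −Σₘ sₘeₘeₘᵀ + Σⱼ κⱼTⱼ]]`,
where `M₀ = I`, `Mᵢ = eᵢvᵀ` and `Tⱼ = eⱼvᵀ + veⱼᵀ`. -/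
def Gmat {n : ℕ} (L : Matrix (Fin n) (Fin n) ℝ) (R : Fin n → Matrix (Fin n) (Fin n) ℝ)
    (v : Fin n → ℝ) (ε δ : ℝ) (μ : Fin (n+1) → ℝ) (κ s : Fin n → ℝ)
    (P : Matrix (Fin n) (Fin n) ℝ) : Matrix (Fin n ⊕ Fin n) (Fin n ⊕ Fin n) ℝ :=
  Matrix.fromBlocks
    (Lᵀ * P + P * L + ε • (1 : Matrix (Fin n) (Fin n) ℝ) + ∑ m, (s m * δ ^ 2) • (R m * R m))
    (P + (μ 0 • (1 : Matrix (Fin n) (Fin n) ℝ) +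
      ∑ i : Fin n, μ i.succ • Matrix.vecMulVec (Pi.single i (1:ℝ)) v))
    (P + (μ 0 • (1 : Matrix (Fin n) (Fin n) ℝ) +
      ∑ i : Fin n, μ i.succ • Matrix.vecMulVec v (Pi.single i (1:ℝ))))
    (-(∑ m, s m • Matrix.vecMulVec (Pi.single m (1:ℝ)) (Pi.single m (1:ℝ))) +
      ∑ j, κ j • (Matrix.vecMulVec (Pi.single j (1:ℝ)) v + Matrix.vecMulVec v (Pi.single j (1:ℝ))))

/-! ### The Euclidean norm and Rayleigh quotients -/

lemma eNorm_nonneg {n : ℕ} (a : Fin n → ℝ) : 0 ≤ eNorm a := Real.sqrt_nonneg _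

lemma eNorm_sq {n : ℕ} (a : Fin n → ℝ) : eNorm a ^ 2 = a ⬝ᵥ a := by
  unfold eNorm
  rw [Real.sq_sqrt (Finset.sum_nonneg fun i _ => sq_nonneg _)]
  simp [dotProduct, sq]

lemma eNorm_zero {n : ℕ} : eNorm (0 : Fin n → ℝ) = 0 := by simp [eNorm]

lemma eNorm_smul {n : ℕ} (c : ℝ) (a : Fin n → ℝ) : eNorm (c • a) = |c| * eNorm a := by
  unfold eNorm
  simp only [Pi.smul_apply, smul_eq_mul, mul_pow, ← Finset.mul_sum]
  rw [Real.sqrt_mul (sq_nonneg c), Real.sqrt_sq_eq_abs]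

lemma continuous_eNorm {n : ℕ} : Continuous (eNorm : (Fin n → ℝ) → ℝ) := by
  unfold eNorm; fun_prop

lemma eq_zero_of_eNorm {n : ℕ} {a : Fin n → ℝ} (h : eNorm a = 0) : a = 0 := by
  have h2 := eNorm_sq a
  rw [h] at h2
  exact dotProduct_self_eq_zero.1 (by linarith)

lemma dotProduct_sq_le {n : ℕ} (a b : Fin n → ℝ) :
    (a ⬝ᵥ b) ^ 2 ≤ eNorm a ^ 2 * eNorm b ^ 2 := by
  have h := Finset.sum_mul_sq_le_sq_mul_sq Finset.univ a b
  rw [eNorm_sq, eNorm_sq]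
  simpa [dotProduct, sq] using h

lemma dotProduct_le {n : ℕ} (a b : Fin n → ℝ) : a ⬝ᵥ b ≤ eNorm a * eNorm b := by
  refine (abs_le_of_sq_le_sq' ?_ (mul_nonneg (eNorm_nonneg a) (eNorm_nonneg b))).2
  rw [mul_pow]; exact dotProduct_sq_le a b

lemma eNorm_unit {n : ℕ} {a : Fin n → ℝ} (h : eNorm a ≠ 0) :
    eNorm ((eNorm a)⁻¹ • a) = 1 := by
  rw [eNorm_smul, abs_of_nonneg (inv_nonneg.2 (eNorm_nonneg a)), inv_mul_cancel₀ h]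

lemma isCompact_eNorm_sphere {n : ℕ} : IsCompact {a : Fin n → ℝ | eNorm a = 1} := by
  refine Metric.isCompact_of_isClosed_isBounded
    (isClosed_eq continuous_eNorm continuous_const) ?_
  refine (Metric.isBounded_closedBall (x := (0 : Fin n → ℝ)) (r := 1)).subset fun a ha => ?_
  rw [mem_closedBall_zero_iff, pi_norm_le_iff_of_nonneg zero_le_one]
  intro i
  have h2 : ∑ i, a i ^ 2 = 1 := Real.sqrt_eq_one.1 ha
  have h3 := Finset.single_le_sum (f := fun i => a i ^ 2) (fun i _ => sq_nonneg _)
    (Finset.mem_univ i)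
  rw [Real.norm_eq_abs]
  exact (sq_le_one_iff_abs_le_one _).1 (by simpa [h2] using h3)

/-- A continuous function takes a bounded set of values on the unit sphere, so the suprema and
infima defining `lamMin`, `lamMax` and `specNorm` are not junk values. -/
lemma image_sphere_bdd {n : ℕ} {g : (Fin n → ℝ) → ℝ} (hg : Continuous g) :
    BddAbove {r | ∃ a : Fin n → ℝ, eNorm a = 1 ∧ r = g a} ∧
    BddBelow {r | ∃ a : Fin n → ℝ, eNorm a = 1 ∧ r = g a} := by
  have h : {r | ∃ a : Fin n → ℝ, eNorm a = 1 ∧ r = g a} = g '' {a | eNorm a = 1} := by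
    ext r; simp [eq_comm]
  rw [h]
  have hc := isCompact_eNorm_sphere.image (f := g) hg
  exact ⟨hc.bddAbove, hc.bddBelow⟩

lemma quad_smul {n : ℕ} (P : Matrix (Fin n) (Fin n) ℝ) (c : ℝ) (a : Fin n → ℝ) :
    (c • a) ⬝ᵥ P.mulVec (c • a) = c ^ 2 * (a ⬝ᵥ P.mulVec a) := by
  simp [mulVec_smul]; ring

lemma continuous_quad {n : ℕ} (P : Matrix (Fin n) (Fin n) ℝ) :
    Continuous fun a : Fin n → ℝ => a ⬝ᵥ P.mulVec a := by
  unfold dotProduct mulVec dotProduct; fun_prop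

lemma lamMin_le {n : ℕ} (P : Matrix (Fin n) (Fin n) ℝ) (a : Fin n → ℝ) :
    lamMin P * eNorm a ^ 2 ≤ a ⬝ᵥ P.mulVec a := by
  by_cases h : eNorm a = 0
  · simp [eq_zero_of_eNorm h, eNorm_zero]
  · have h1 : lamMin P ≤ _ := csInf_le (image_sphere_bdd (continuous_quad P)).2 ⟨_, eNorm_unit h, rfl⟩
    rw [quad_smul, inv_pow, inv_mul_eq_div, le_div_iff₀ (by positivity)] at h1
    exact h1

lemma le_lamMax {n : ℕ} (P : Matrix (Fin n) (Fin n) ℝ) (a : Fin n → ℝ) :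
    a ⬝ᵥ P.mulVec a ≤ lamMax P * eNorm a ^ 2 := by
  by_cases h : eNorm a = 0
  · simp [eq_zero_of_eNorm h, eNorm_zero]
  · have h1 : _ ≤ lamMax P := le_csSup (image_sphere_bdd (continuous_quad P)).1 ⟨_, eNorm_unit h, rfl⟩
    rw [quad_smul, inv_pow, inv_mul_eq_div, div_le_iff₀ (by positivity)] at h1
    exact h1

lemma eNorm_mulVec_le {n : ℕ} (M : Matrix (Fin n) (Fin n) ℝ) (a : Fin n → ℝ) :
    eNorm (M.mulVec a) ≤ specNorm M * eNorm a := by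
  by_cases h : eNorm a = 0
  · simp [eq_zero_of_eNorm h, eNorm_zero]
  · have hc : Continuous fun a : Fin n → ℝ => eNorm (M.mulVec a) :=
      continuous_eNorm.comp (by unfold mulVec dotProduct; fun_prop)
    have h1 : _ ≤ specNorm M := le_csSup (image_sphere_bdd hc).1 ⟨_, eNorm_unit h, rfl⟩
    have h0 : 0 < eNorm a := lt_of_le_of_ne (eNorm_nonneg a) (Ne.symm h)
    rw [mulVec_smul, eNorm_smul, abs_of_nonneg (inv_nonneg.2 h0.le), inv_mul_eq_div,
      div_le_iff₀ h0] at h1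
    exact h1

lemma specNorm_nonneg {n : ℕ} (M : Matrix (Fin n) (Fin n) ℝ) : 0 ≤ specNorm M :=
  Real.sSup_nonneg (by rintro _ ⟨a, -, rfl⟩; exact eNorm_nonneg _)

lemma lam_bounds {n : ℕ} [NeZero n] {P : Matrix (Fin n) (Fin n) ℝ} {ε : ℝ}
    (h : (P - ε • (1 : Matrix (Fin n) (Fin n) ℝ)).PosSemidef) :
    ε ≤ lamMin P ∧ lamMin P ≤ lamMax P := by
  have h1 : eNorm (Pi.single 0 1 : Fin n → ℝ) = 1 := by
    rw [← sq_eq_sq₀ (eNorm_nonneg _) zero_le_one, eNorm_sq]; simp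
  constructor
  · refine le_csInf ⟨_, _, h1, rfl⟩ ?_
    rintro _ ⟨a, ha, rfl⟩
    have h2 := h.dotProduct_mulVec_nonneg a
    have h3 := eNorm_sq a
    rw [ha] at h3
    simp [sub_mulVec, smul_mulVec, dotProduct_sub, ← h3] at h2
    exact h2
  · have := (lamMin_le P _).trans (le_lamMax P (Pi.single 0 1))
    simpa [h1] using this

/-! ### The dissipation inequality -/

/-- The quadratic form of `Gmat` at `(a, w)`. When `w` is orthogonal to both `a` and `v`, every
multiplier term vanishes. -/
lemma Gmat_quad {n : ℕ} (L : Matrix (Fin n) (Fin n) ℝ) (R : Fin n → Matrix (Fin n) (Fin n) ℝ)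
    (hR : ∀ m, (R m)ᵀ = R m)
    (v : Fin n → ℝ) (ε δ : ℝ) (μ : Fin (n+1) → ℝ) (κ s : Fin n → ℝ)
    (P : Matrix (Fin n) (Fin n) ℝ) (hP : Pᵀ = P) (a w : Fin n → ℝ)
    (haw : a ⬝ᵥ w = 0) (hvw : v ⬝ᵥ w = 0) :
    Sum.elim a w ⬝ᵥ (Gmat L R v ε δ μ κ s P).mulVec (Sum.elim a w) =
      2 * (a ⬝ᵥ P.mulVec (L.mulVec a + w)) + ε * eNorm a ^ 2
        + ∑ m, s m * (δ ^ 2 * eNorm ((R m).mulVec a) ^ 2 - w m ^ 2) := by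
  have hwa : w ⬝ᵥ a = 0 := by rw [dotProduct_comm, haw]
  have hwv : w ⬝ᵥ v = 0 := by rw [dotProduct_comm, hvw]
  have hsym : ∀ (M : Matrix (Fin n) (Fin n) ℝ), Mᵀ = M → ∀ x y : Fin n → ℝ,
      x ⬝ᵥ M.mulVec y = M.mulVec x ⬝ᵥ y := by
    intro M hM x y
    rw [dotProduct_mulVec, ← mulVec_transpose, hM]
  have hL : a ⬝ᵥ Lᵀ.mulVec (P.mulVec a) = a ⬝ᵥ P.mulVec (L.mulVec a) := by
    rw [dotProduct_mulVec, vecMul_transpose, hsym P hP, dotProduct_comm]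
  have hPw : w ⬝ᵥ P.mulVec a = a ⬝ᵥ P.mulVec w := by
    rw [hsym P hP, dotProduct_comm]
  have hRa : ∀ m, a ⬝ᵥ (R m).mulVec ((R m).mulVec a) = eNorm ((R m).mulVec a) ^ 2 := by
    intro m; rw [hsym _ (hR m), eNorm_sq]
  have hsplit : ∀ m, s m * (δ ^ 2 * eNorm ((R m).mulVec a) ^ 2 - w m ^ 2)
      = s m * δ ^ 2 * eNorm ((R m).mulVec a) ^ 2 - s m * w m ^ 2 := fun m => by ring
  simp only [Gmat, fromBlocks_mulVec, sumElim_dotProduct_sumElim, Sum.elim_comp_inl,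
    Sum.elim_comp_inr, add_mulVec, neg_mulVec, sum_mulVec, smul_mulVec, vecMulVec_mulVec,
    one_mulVec, ← mulVec_mulVec, dotProduct_add, dotProduct_neg, dotProduct_sum, dotProduct_smul,
    mulVec_add, hL, hPw, hRa, haw, hvw, hwa, hwv, hsplit, Finset.sum_sub_distrib, ← eNorm_sq]
  simp [sq]
  ring

/-- The dissipation inequality for `V(a) = aᵀPa`. Outside the ball of radius `δ` the quadratic
bound on the nonlinearity fails only by a term proportional to `‖a‖² - δ²`. -/
lemma dissipation {n : ℕ} (L : Matrix (Fin n) (Fin n) ℝ) (R : Fin n → Matrix (Fin n) (Fin n) ℝ)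
    (hRsym : ∀ m, (R m)ᵀ = R m) (v : Fin n → ℝ)
    (hloss : ∀ a : Fin n → ℝ, a ⬝ᵥ Ups R a = 0)
    (hlossv : ∀ a : Fin n → ℝ, v ⬝ᵥ Ups R a = 0)
    (ε δ : ℝ) (μ : Fin (n+1) → ℝ) (κ s : Fin n → ℝ)
    (P : Matrix (Fin n) (Fin n) ℝ) (hPsym : Pᵀ = P)
    (hLMI₂ : (-(Gmat L R v ε δ μ κ s P)).PosSemidef)
    (hs : ∀ m, 0 ≤ s m) (a u : Fin n → ℝ) :
    2 * (a ⬝ᵥ P.mulVec (L.mulVec a + Ups R a + u)) ≤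
      -ε * eNorm a ^ 2 + specNorm ((2:ℝ) • P) * eNorm a * eNorm u
        + (eNorm a ^ 2 - δ ^ 2) * ∑ m, s m * eNorm ((R m).mulVec a) ^ 2 := by
  have h1 := hLMI₂.dotProduct_mulVec_nonneg (Sum.elim a (Ups R a))
  rw [neg_mulVec, dotProduct_neg, star_trivial,
    Gmat_quad L R hRsym v ε δ μ κ s P hPsym a _ (hloss a) (hlossv a)] at h1
  have h2 : 2 * (a ⬝ᵥ P.mulVec u) ≤ specNorm ((2:ℝ) • P) * eNorm a * eNorm u := by
    have e : 2 * (a ⬝ᵥ P.mulVec u) = ((2:ℝ) • P).mulVec a ⬝ᵥ u := by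
      rw [smul_mulVec, smul_dotProduct, smul_eq_mul, dotProduct_mulVec, ← mulVec_transpose, hPsym]
    rw [e]
    exact (dotProduct_le _ _).trans
      (mul_le_mul_of_nonneg_right (eNorm_mulVec_le _ _) (eNorm_nonneg _))
  have h3 : ∑ m, s m * (δ ^ 2 * eNorm ((R m).mulVec a) ^ 2 - Ups R a m ^ 2) ≥
      (δ ^ 2 - eNorm a ^ 2) * ∑ m, s m * eNorm ((R m).mulVec a) ^ 2 := by
    rw [Finset.mul_sum]
    refine Finset.sum_le_sum fun m _ => ?_
    have := mul_le_mul_of_nonneg_left (dotProduct_sq_le a ((R m).mulVec a)) (hs m)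
    simp only [Ups]
    linarith
  rw [mulVec_add, dotProduct_add]
  linarith

lemma hasDerivWithinAt_quad {n : ℕ} {P : Matrix (Fin n) (Fin n) ℝ} (hP : Pᵀ = P)
    {a : ℝ → Fin n → ℝ} {a' : Fin n → ℝ} {S : Set ℝ} {t : ℝ} (h : HasDerivWithinAt a a' S t) :
    HasDerivWithinAt (fun t => a t ⬝ᵥ P.mulVec (a t)) (2 * (a t ⬝ᵥ P.mulVec a')) S t := by
  have hi := hasDerivWithinAt_pi.1 h
  have h1 : HasDerivWithinAt (fun t => ∑ i, a t i * ∑ j, P i j * a t j)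
      (∑ i, (a' i * ∑ j, P i j * a t j + a t i * ∑ j, P i j * a' j)) S t :=
    HasDerivWithinAt.fun_sum fun i _ => (hi i).mul
      (HasDerivWithinAt.fun_sum fun j _ => (hi j).const_mul (P i j))
  have h2 : ∑ i, (a' i * ∑ j, P i j * a t j + a t i * ∑ j, P i j * a' j)
      = 2 * (a t ⬝ᵥ P.mulVec a') := by
    rw [Finset.sum_add_distrib]
    have : a' ⬝ᵥ P.mulVec (a t) = a t ⬝ᵥ P.mulVec a' := by
      rw [dotProduct_mulVec, ← mulVec_transpose, hP, dotProduct_comm]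
    change a' ⬝ᵥ P.mulVec (a t) + a t ⬝ᵥ P.mulVec a' = _
    rw [this]; ring
  rw [← h2]
  exact h1

/-! ### Invariance of sublevel sets -/

/-- Sublevel sets are invariant when the derivative is bounded by a multiple of the excess over
the level: compare with the strict supersolutions `c + η e^{(K+1)t}` and let `η → 0`. -/
lemma le_of_deriv_le_excess {V V' : ℝ → ℝ} {τ c K : ℝ}
    (hV : ∀ t ∈ Icc (0:ℝ) τ, HasDerivWithinAt V (V' t) (Icc 0 τ) t) (h0 : V 0 ≤ c)
    (hb : ∀ t ∈ Icc (0:ℝ) τ, c ≤ V t → V' t ≤ K * (V t - c)) :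
    ∀ t ∈ Icc (0:ℝ) τ, V t ≤ c := by
  intro t ht
  have key : ∀ η : ℝ, 0 < η → V t ≤ c + η * Real.exp ((K + 1) * t) := by
    intro η hη
    refine image_le_of_deriv_right_lt_deriv_boundary
      (f := V) (f' := V') (a := 0) (b := τ) (B := fun t => c + η * Real.exp ((K + 1) * t))
      (B' := fun t => η * (Real.exp ((K + 1) * t) * (K + 1)))
      (fun t ht => (hV t ht).continuousWithinAt) ?_ ?_ ?_ ?_ ht
    · intro x hx
      exact (hV x (Ico_subset_Icc_self hx)).mono_of_mem_nhdsWithin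
        (Icc_mem_nhdsGE_of_mem hx)
    · simp; linarith
    · intro x
      have h1 : HasDerivAt (fun t : ℝ => (K + 1) * t) (K + 1) x := by
        simpa using (hasDerivAt_id x).const_mul (K + 1)
      exact (h1.exp.const_mul η).const_add c
    · intro x hx hxe
      have hp : 0 < η * Real.exp ((K + 1) * x) := by positivity
      have := hb x (Ico_subset_Icc_self hx) (by rw [hxe]; linarith)
      rw [hxe] at this
      nlinarith
  by_contra hlt
  push Not at hlt
  have he := Real.exp_pos ((K + 1) * t)
  have := key ((V t - c) / (2 * Real.exp ((K + 1) * t))) (by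
    have : 0 < V t - c := by linarith
    positivity)
  have e : (V t - c) / (2 * Real.exp ((K + 1) * t)) * Real.exp ((K + 1) * t) = (V t - c) / 2 := by
    field_simp
  rw [e] at this
  linarith

/-! ### Truncated signals and the gain bound -/

lemma eLinf_trunc_le {n : ℕ} {g : ℝ → Fin n → ℝ} {τ B : ℝ} (hτ : 0 < τ)
    (h : ∀ t ∈ Icc (0:ℝ) τ, eNorm (g t) ≤ B) : eLinf (trunc τ g) ≤ B := by
  have : Nonempty (Set.Ici (0:ℝ)) := ⟨⟨0, Set.self_mem_Ici⟩⟩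
  refine ciSup_le fun t => ?_
  by_cases ht : t.1 ≤ τ
  · simpa [trunc, ht] using h t.1 ⟨t.2, ht⟩
  · simpa [trunc, ht, eNorm_zero] using (eNorm_nonneg _).trans (h 0 ⟨le_rfl, hτ.le⟩)

lemma le_eLinf_trunc {n : ℕ} {g : ℝ → Fin n → ℝ} {τ B : ℝ}
    (h : ∀ t ∈ Icc (0:ℝ) τ, eNorm (g t) ≤ B) {t : ℝ} (ht : t ∈ Icc (0:ℝ) τ) :
    eNorm (g t) ≤ eLinf (trunc τ g) := by
  have hb : BddAbove (range fun t : Set.Ici (0:ℝ) => eNorm (trunc τ g t.1)) := by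
    refine ⟨B, ?_⟩
    rintro _ ⟨u, rfl⟩
    by_cases hu : u.1 ≤ τ
    · simpa [trunc, hu] using h u.1 ⟨u.2, hu⟩
    · simpa [trunc, hu, eNorm_zero] using (eNorm_nonneg _).trans (h t ht)
  have := le_ciSup hb ⟨t, ht.1⟩
  simpa [eLinf, trunc, ht.2] using this

/-- **LMI-certified L∞ input–output bound** (Theorem 2, case p = ∞):
under the LMI feasibility, initial-condition and small-signal hypotheses,
the truncated output y = a satisfies ‖y_τ‖_{L∞} ≤ γ‖f_τ‖_{L∞} + β with
γ = λmax(P)‖2P‖/(λmin(P)ε) and β = ‖a₀‖√(λmax(P)/λmin(P)). -/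
theorem lmi_Linf_gain
    {n : ℕ} (L : Matrix (Fin n) (Fin n) ℝ)
    (hHurwitz : ∀ z ∈ spectrum ℂ (L.map (algebraMap ℝ ℂ)), z.re < 0)
    (R : Fin n → Matrix (Fin n) (Fin n) ℝ) (hRsym : ∀ m, (R m)ᵀ = R m)
    (v : Fin n → ℝ)
    (hloss : ∀ a : Fin n → ℝ, a ⬝ᵥ Ups R a = 0)
    (hlossv : ∀ a : Fin n → ℝ, v ⬝ᵥ Ups R a = 0)
    (ε δ : ℝ) (hε : 0 < ε) (hδ : 0 < δ)
    (μ : Fin (n+1) → ℝ) (κ s : Fin n → ℝ)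
    (P : Matrix (Fin n) (Fin n) ℝ) (hPsym : Pᵀ = P)
    (hLMI₁ : (P - ε • (1 : Matrix (Fin n) (Fin n) ℝ)).PosSemidef)
    (hLMI₂ : (-(Gmat L R v ε δ μ κ s P)).PosSemidef)
    (hs : ∀ m, 0 ≤ s m)
    (τ : ℝ) (hτ : 0 < τ)
    (a₀ : Fin n → ℝ) (ha₀ : eNorm a₀ ≤ δ * Real.sqrt (lamMin P / lamMax P))
    (f : ℝ → Fin n → ℝ) (hfc : Continuous f)
    (hfsmall : ∀ t ∈ Icc (0:ℝ) τ,
      eNorm (f t) ≤ lamMin P * ε * δ / (lamMax P * specNorm ((2:ℝ) • P)))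
    (a : ℝ → Fin n → ℝ)
    (hode : ∀ t ∈ Icc (0:ℝ) τ,
      HasDerivWithinAt a (L.mulVec (a t) + Ups R (a t) + f t) (Icc (0:ℝ) τ) t)
    (hinit : a 0 = a₀) :
    eLinf (trunc τ a) ≤
      (lamMax P * specNorm ((2:ℝ) • P) / (lamMin P * ε)) * eLinf (trunc τ f)
        + eNorm a₀ * Real.sqrt (lamMax P / lamMin P) := by
  have hG := dissipation L R hRsym v hloss hlossv ε δ μ κ s P hPsym hLMI₂ hs
  -- In dimension zero the Rayleigh sets are empty and both sides vanish.
  rcases Nat.eq_zero_or_pos n with rfl | hn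
  · simp [eLinf, eNorm, lamMin]
  have : NeZero n := ⟨hn.ne'⟩
  obtain ⟨hεl, hlM⟩ := lam_bounds hLMI₁
  set l := lamMin P with hl
  set M := lamMax P with hM
  set σ := specNorm ((2:ℝ) • P) with hσ
  set F := eLinf (trunc τ f) with hF
  set A := eNorm a₀ with hA
  have hl0 : 0 < l := by linarith
  have hM0 : 0 < M := by linarith
  have hσ0 : 0 ≤ σ := specNorm_nonneg _
  have hA0 : 0 ≤ A := eNorm_nonneg _
  have hfF : ∀ t ∈ Icc (0:ℝ) τ, eNorm (f t) ≤ F := fun t ht => le_eLinf_trunc hfsmall ht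
  have hF0 : 0 ≤ F := (eNorm_nonneg _).trans (hfF 0 ⟨le_rfl, hτ.le⟩)
  have hFs : F ≤ l * ε * δ / (M * σ) := eLinf_trunc_le hτ hfsmall
  -- Above the radius `r` the damping `ε‖a‖²` dominates the forcing `σ‖a‖F`.
  set r := σ * F / ε with hr
  have hr0 : 0 ≤ r := by positivity
  have hrδ : r ≤ l * δ / M := by
    rcases hσ0.eq_or_lt with h | h
    · have : r = 0 := by rw [hr, ← h]; simp
      rw [this]; positivity
    · rw [hr, div_le_div_iff₀ hε hM0]
      rw [le_div_iff₀ (by positivity)] at hFs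
      linarith
  set m := max A r with hm
  have hm0 : 0 ≤ m := hA0.trans (le_max_left _ _)
  -- The invariant level `M m²` lies inside the ball where the LMI certifies decay.
  have hmδ : M * m ^ 2 ≤ l * δ ^ 2 := by
    rcases max_choice A r with h | h
    · rw [hm, h]
      have h1 : A ^ 2 ≤ (δ * Real.sqrt (l / M)) ^ 2 := pow_le_pow_left₀ hA0 ha₀ 2
      rw [mul_pow, Real.sq_sqrt (by positivity)] at h1
      calc M * A ^ 2 ≤ M * (δ ^ 2 * (l / M)) := by gcongr
        _ = l * δ ^ 2 := by field_simp
    · rw [hm, h]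
      calc M * r ^ 2 ≤ M * (l * δ / M) ^ 2 := by gcongr
        _ = l * δ ^ 2 * (l / M) := by field_simp
        _ ≤ l * δ ^ 2 * 1 := by
          gcongr
          exact (div_le_one hM0).2 hlM
        _ = l * δ ^ 2 := mul_one _
  have hac : ContinuousOn a (Icc 0 τ) := fun t ht => (hode t ht).continuousWithinAt
  have hSc : Continuous fun x : Fin n → ℝ => ∑ k, s k * eNorm ((R k).mulVec x) ^ 2 := by
    refine continuous_finsetSum _ fun k _ => continuous_const.mul (Continuous.pow ?_ 2)
    exact continuous_eNorm.comp (by unfold mulVec dotProduct; fun_prop)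
  obtain ⟨C, hC⟩ := (isCompact_Icc.image_of_continuousOn (hSc.comp_continuousOn hac)).bddAbove
  have hCb : ∀ t ∈ Icc (0:ℝ) τ, ∑ k, s k * eNorm ((R k).mulVec (a t)) ^ 2 ≤ C :=
    fun t ht => hC ⟨t, ht, rfl⟩
  have hS0 : ∀ t, 0 ≤ ∑ k, s k * eNorm ((R k).mulVec (a t)) ^ 2 :=
    fun t => Finset.sum_nonneg fun k _ => mul_nonneg (hs k) (sq_nonneg _)
  have hVle := le_of_deriv_le_excess (V := fun t => a t ⬝ᵥ P.mulVec (a t))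
    (c := M * m ^ 2) (K := C / l)
    (fun t ht => hasDerivWithinAt_quad hPsym (hode t ht))
    (by
      simp only [hinit]
      refine (le_lamMax P a₀).trans ?_
      have : A ≤ m := le_max_left _ _
      change M * A ^ 2 ≤ _
      gcongr)
    (by
      intro t ht hct
      refine (hG (a t) (f t)).trans ?_
      have hN0 := eNorm_nonneg (a t)
      have h1 : M * m ^ 2 ≤ M * eNorm (a t) ^ 2 := hct.trans (le_lamMax P (a t))
      have h2 : m ≤ eNorm (a t) :=
        (sq_le_sq₀ hm0 hN0).1 (le_of_mul_le_mul_left h1 hM0)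
      have h3 : σ * F ≤ ε * eNorm (a t) := by
        have := (le_max_right A r).trans h2
        rw [hr, div_le_iff₀ hε] at this
        linarith
      have h4 : σ * eNorm (a t) * eNorm (f t) ≤ ε * eNorm (a t) ^ 2 := by
        calc σ * eNorm (a t) * eNorm (f t) ≤ σ * eNorm (a t) * F := by
              gcongr
              exact hfF t ht
          _ = eNorm (a t) * (σ * F) := by ring
          _ ≤ eNorm (a t) * (ε * eNorm (a t)) := by gcongr
          _ = _ := by ring
      have h5 : eNorm (a t) ^ 2 - δ ^ 2 ≤ (a t ⬝ᵥ P.mulVec (a t) - M * m ^ 2) / l := by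
        rw [le_div_iff₀ hl0]
        have := lamMin_le P (a t)
        rw [← hl] at this
        linarith
      have h6 : (eNorm (a t) ^ 2 - δ ^ 2) * ∑ k, s k * eNorm ((R k).mulVec (a t)) ^ 2
          ≤ C / l * (a t ⬝ᵥ P.mulVec (a t) - M * m ^ 2) := by
        have h7 : 0 ≤ (a t ⬝ᵥ P.mulVec (a t) - M * m ^ 2) / l :=
          div_nonneg (sub_nonneg.2 hct) hl0.le
        calc _ ≤ (a t ⬝ᵥ P.mulVec (a t) - M * m ^ 2) / l *
              ∑ k, s k * eNorm ((R k).mulVec (a t)) ^ 2 :=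
              mul_le_mul_of_nonneg_right h5 (hS0 t)
          _ ≤ (a t ⬝ᵥ P.mulVec (a t) - M * m ^ 2) / l * C :=
              mul_le_mul_of_nonneg_left (hCb t ht) h7
          _ = _ := by ring
      linarith)
  refine eLinf_trunc_le hτ fun t ht => ?_
  have h1 : l * eNorm (a t) ^ 2 ≤ M * m ^ 2 := (lamMin_le P (a t)).trans (hVle t ht)
  set q := Real.sqrt (M / l) with hq
  have hq2 : q ^ 2 = M / l := Real.sq_sqrt (by positivity)
  have hq1 : 1 ≤ q := Real.one_le_sqrt.2 ((one_le_div hl0).2 hlM)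
  have h2 : eNorm (a t) ≤ q * m := by
    refine (sq_le_sq₀ (eNorm_nonneg _) (by positivity)).1 ?_
    rw [mul_pow, hq2, div_mul_eq_mul_div, le_div_iff₀ hl0]
    linarith
  have h3 : M * σ / (l * ε) * F = q ^ 2 * r := by
    rw [hq2, hr]; field_simp
  rw [h3]
  have h4 : m ≤ A + r := max_le (by linarith) (by linarith)
  -- Since `q ≥ 1`, the factor `q` on the forcing term may be weakened to `q² = M / l`.
  have h5 : q * r ≤ q ^ 2 * r := by
    gcongr
    nlinarith
  nlinarith [mul_le_mul_of_nonneg_left h4 (zero_le_one.trans hq1)]
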